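/- Let g ≠ h be two indices in {0,…,n/s−1}, let π be the permutation of {0,…,ℓ−1} that exchanges the g-th and h-th base-s digits of its argument, and let P be the ℓ × ℓ permutation matrix with P(i,j) = 1 if and only if j = π(i). Then for every b ∈ {0,…,s−1} and every t ≥ 1: (i) the matrix (P ⊗ I_t) · A_{g,b}^(t) · P, viewed as an ℓ × ℓ block matrix whose blocks are column vectors of length t, has (i,j) block equal to L_{gs^2+bs+j_h}^(t) if i = j, equal to −L_{gs^2+bs+j_h}^(t) if i_h = b ≠ j_h and i_u = j_u for all u ≠ h, and zero otherwise — i.e., it is obtained from A_{h,b}^(t) by replacing λ_{hs^2+bs+j} with λ_{gs^2+bs+j} for each j ∈ {0,…,s−1}; and (ii) for every a ∉ {g,h}, (P ⊗ I_t) · A_{a,b}^(t) · P = A_{a,b}^(t). -/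

import Mathlib

open Matrix

/-- The `u`-th digit of `i` in base `s`. -/
def digit (s i u : ℕ) : ℕ := i / s ^ u % s

open scoped Classical in
/-- Generalized block entry: the `z`-th entry of the `(i,j)` block of an `A`-type matrix
whose `λ`-indices start at `base` and whose relevant digit position is `apos`:
it is `λ_{base+bs+j_apos}^z` if `i = j`, `−λ_{base+bs+j_apos}^z` if
`i_apos = b ≠ j_apos` and `i_u = j_u` for all `u ≠ apos`, and `0` otherwise. -/
noncomputable def AentGen {F : Type*} [Field F] (lam : ℕ → F) (s base apos b i j z : ℕ) : F :=
  if i = j then lam (base + b * s + digit s j apos) ^ z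
  else if digit s i apos = b ∧ digit s j apos ≠ b ∧
      (∀ u, u ≠ apos → digit s i u = digit s j u) then
    -(lam (base + b * s + digit s j apos) ^ z)
  else 0

/-- The block entry of `A_{a,b}^{(t)}` of the first construction (`λ`-index base `a·s²`,
digit position `a`). -/
noncomputable def Aent {F : Type*} [Field F] (lam : ℕ → F) (s a b i j z : ℕ) : F :=
  AentGen lam s (a * s * s) a b i j z

/-- `A_{a,b}^{(t)}` as an `ℓt × ℓ` matrix; row `ρ` encodes block row `ρ / t` and
inner row `ρ % t`. -/
noncomputable def Amat {F : Type*} [Field F] (lam : ℕ → F) (s ℓ a b t : ℕ) :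
    Matrix (Fin (ℓ * t)) (Fin ℓ) F :=
  Matrix.of fun ρ j => Aent lam s a b ((ρ : ℕ) / t) (j : ℕ) ((ρ : ℕ) % t)

/-- The permutation `π_{g,h}` of `ℕ` exchanging the `g`-th and `h`-th base-`s` digits. -/
def swapDigits (s g h i : ℕ) : ℕ :=
  i - digit s i g * s ^ g - digit s i h * s ^ h + digit s i h * s ^ g + digit s i g * s ^ h

/-- The `ℓ × ℓ` permutation matrix `P_{g,h}` with `P(i,j) = 1` iff `j = π_{g,h}(i)`. -/
def Pmat (F : Type*) [Field F] (s g h ℓ : ℕ) : Matrix (Fin ℓ) (Fin ℓ) F :=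
  Matrix.of fun i j => if (j : ℕ) = swapDigits s g h (i : ℕ) then 1 else 0

/-- The `ℓt × ℓt` matrix `P_{g,h} ⊗ I_t` (rows/columns `ρ` encode block `ρ / t` and
inner index `ρ % t`). -/
def PkronI (F : Type*) [Field F] (s g h ℓ t : ℕ) :
    Matrix (Fin (ℓ * t)) (Fin (ℓ * t)) F :=
  Matrix.of fun ρ κ =>
    if (κ : ℕ) / t = swapDigits s g h ((ρ : ℕ) / t) ∧ (κ : ℕ) % t = (ρ : ℕ) % t then 1 else 0

/-!
Writing a number below `s ^ m` as the function listing its `m` base-`s` digits turns `π` into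
precomposition with the transposition of `g` and `h`; in particular it is an involution of
`{0, …, s ^ m - 1}`. Multiplying by the permutation matrices `P ⊗ I_t` and `P` therefore just
relabels block rows and columns by `π`. A block entry of `A_{a,b}` depends on its row and column
only through their digits, with position `a` singled out, so the relabelling moves `a` to its image
under the transposition and keeps the base `a * s ^ 2` of the `λ`-indices.
-/

/-- The permutation of `{0, …, s ^ m - 1}` moving base-`s` digits around by `τ`: digit `u` of the
image of `i` is digit `τ u` of `i`. -/
def digitPerm {m : ℕ} (s : ℕ) (τ : Equiv.Perm (Fin m)) : Equiv.Perm (Fin (s ^ m)) :=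
  finFunctionFinEquiv.permCongr (τ.symm.arrowCongr (Equiv.refl (Fin s)))

/-- The permutation of row indices `ρ` acting as `σ` on the block index `ρ / t` and fixing the
inner index `ρ % t`; its permutation matrix is the Kronecker product of that of `σ` with `I_t`. -/
def blockPerm {ℓ : ℕ} (t : ℕ) (σ : Equiv.Perm (Fin ℓ)) : Equiv.Perm (Fin (ℓ * t)) :=
  finProdFinEquiv.permCongr (σ.prodCongr (Equiv.refl (Fin t)))

section Digits

variable {m s : ℕ}

theorem digit_eq_zero_of_lt_pow {i u : ℕ} (hi : i < s ^ m) (hu : m ≤ u) : digit s i u = 0 := by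
  rcases s.eq_zero_or_pos with rfl | hs
  · have hi₀ : i = 0 := Nat.lt_one_iff.mp (hi.trans_le (zero_pow_le_one m))
    simp [digit, hi₀]
  · rw [digit, Nat.div_eq_of_lt (hi.trans_le (Nat.pow_le_pow_right hs hu)), Nat.zero_mod]

theorem sum_digit_mul_pow (i : Fin (s ^ m)) : ∑ u : Fin m, digit s i u * s ^ (u : ℕ) = i := by
  have := congrArg Fin.val (finFunctionFinEquiv.apply_symm_apply i)
  rwa [finFunctionFinEquiv_apply] at this

theorem val_digitPerm (τ : Equiv.Perm (Fin m)) (i : Fin (s ^ m)) :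
    (digitPerm s τ i : ℕ) = ∑ u, digit s i (τ u) * s ^ (u : ℕ) :=
  finFunctionFinEquiv_apply _

theorem digit_digitPerm (τ : Equiv.Perm (Fin m)) (i : Fin (s ^ m)) (u : Fin m) :
    digit s (digitPerm s τ i) u = digit s i (τ u) :=
  congrArg Fin.val (congrFun (finFunctionFinEquiv.symm_apply_apply
    (finFunctionFinEquiv.symm i ∘ τ)) u)

theorem symm_digitPerm (τ : Equiv.Perm (Fin m)) :
    (digitPerm s τ).symm = digitPerm s τ.symm :=
  rfl

theorem digit_digitPerm_swap (g h : Fin m) (i : Fin (s ^ m)) (u : ℕ) :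
    digit s (digitPerm s (Equiv.swap g h) i) u = digit s i (Equiv.swap (g : ℕ) h u) := by
  rcases lt_or_ge u m with hu | hu
  · have val_swap := Fin.val_injective.map_swap (x := g) (y := h) (z := ⟨u, hu⟩)
    rw [← val_swap]
    exact digit_digitPerm (Equiv.swap g h) i ⟨u, hu⟩
  · rw [Equiv.swap_apply_of_ne_of_ne (by lia) (by lia), digit_eq_zero_of_lt_pow (Fin.is_lt _) hu,
      digit_eq_zero_of_lt_pow i.is_lt hu]

theorem val_digitPerm_swap {g h : Fin m} (hgh : g ≠ h) (i : Fin (s ^ m)) :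
    (digitPerm s (Equiv.swap g h) i : ℕ) = swapDigits s g h i := by
  have sum_split (f : Fin m → ℕ) : f g + f h + ∑ u ∈ {g, h}ᶜ, f u = ∑ u, f u := by
    rw [← Finset.sum_add_sum_compl {g, h} f, Finset.sum_pair hgh]
  have swap_sum := val_digitPerm (Equiv.swap g h) i
  have digit_sum := sum_digit_mul_pow i
  have other_digits_sum : ∑ u ∈ {g, h}ᶜ, digit s i (Equiv.swap g h u) * s ^ (u : ℕ) =
      ∑ u ∈ {g, h}ᶜ, digit s i u * s ^ (u : ℕ) := by
    refine Finset.sum_congr rfl fun u hu => ?_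
    have hu : u ≠ g ∧ u ≠ h := by simpa using hu
    rw [Equiv.swap_apply_of_ne_of_ne hu.1 hu.2]
  rw [← sum_split, Equiv.swap_apply_left, Equiv.swap_apply_right,
    other_digits_sum] at swap_sum
  rw [← sum_split] at digit_sum
  -- `digit_sum` shows that the truncated subtractions in `swapDigits` are exact.
  unfold swapDigits
  lia

end Digits

section Matrices

variable {F : Type*} [Field F]

theorem divNat_blockPerm {ℓ t : ℕ} (σ : Equiv.Perm (Fin ℓ)) (ρ : Fin (ℓ * t)) :
    (blockPerm t σ ρ).divNat = σ ρ.divNat :=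
  congrArg Prod.fst (finProdFinEquiv.symm_apply_apply (σ ρ.divNat, ρ.modNat))

theorem modNat_blockPerm {ℓ t : ℕ} (σ : Equiv.Perm (Fin ℓ)) (ρ : Fin (ℓ * t)) :
    (blockPerm t σ ρ).modNat = ρ.modNat :=
  congrArg Prod.snd (finProdFinEquiv.symm_apply_apply (σ ρ.divNat, ρ.modNat))

theorem AentGen_of_digit_perm (lam : ℕ → F) {s i j i' j' : ℕ} (τ : Equiv.Perm ℕ)
    (hij : i' = j' ↔ i = j) (hi : ∀ u, digit s i' u = digit s i (τ u))
    (hj : ∀ u, digit s j' u = digit s j (τ u)) (base a b z : ℕ) :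
    AentGen lam s base a b i' j' z = AentGen lam s base (τ a) b i j z := by
  have other_digits : (∀ u, u ≠ a → digit s i (τ u) = digit s j (τ u)) ↔
      ∀ u, u ≠ τ a → digit s i u = digit s j u := by
    rw [← τ.forall_congr_right (q := fun u => u ≠ τ a → digit s i u = digit s j u)]
    simp only [ne_eq, τ.apply_eq_iff_eq]
  have off_diagonal : (digit s i' a = b ∧ digit s j' a ≠ b ∧
        ∀ u, u ≠ a → digit s i' u = digit s j' u) ↔
      digit s i (τ a) = b ∧ digit s j (τ a) ≠ b ∧
        ∀ u, u ≠ τ a → digit s i u = digit s j u := by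
    simp only [hi, hj, other_digits]
  classical
  unfold AentGen
  exact if_congr hij (by rw [hj]) (if_congr off_diagonal (by rw [hj]) rfl)

variable {m s : ℕ} {g h : Fin m}

theorem Pmat_eq_permMatrix (hgh : g ≠ h) :
    Pmat F s g h (s ^ m) = (digitPerm s (Equiv.swap g h)).permMatrix F := by
  ext i j
  simp only [Pmat, of_apply, PEquiv.toMatrix_apply, Equiv.toPEquiv_apply, Option.mem_some_iff,
    ← val_digitPerm_swap hgh, Fin.ext_iff, eq_comm]

theorem PkronI_eq_permMatrix (hgh : g ≠ h) (t : ℕ) :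
    PkronI F s g h (s ^ m) t =
      (blockPerm t (digitPerm s (Equiv.swap g h))).permMatrix F := by
  ext ρ κ
  have eq_iff : blockPerm t (digitPerm s (Equiv.swap g h)) ρ = κ ↔
      (κ : ℕ) / t = swapDigits s g h ((ρ : ℕ) / t) ∧ (κ : ℕ) % t = (ρ : ℕ) % t := by
    rw [eq_comm, ← Fin.coe_divNat ρ, ← val_digitPerm_swap hgh,
      ← finProdFinEquiv.symm.apply_eq_iff_eq, Prod.ext_iff]
    simp only [finProdFinEquiv_symm_apply, divNat_blockPerm, modNat_blockPerm, Fin.ext_iff,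
      Fin.coe_divNat, Fin.coe_modNat]
  simp only [PkronI, of_apply, PEquiv.toMatrix_apply, Equiv.toPEquiv_apply, Option.mem_some_iff,
    eq_iff]

end Matrices

theorem statement9_general (F : Type*) [Field F] (lam : ℕ → F) {m s : ℕ} {g h : Fin m}
    (hgh : g ≠ h) (a b t : ℕ) (ρ : Fin (s ^ m * t)) (j : Fin (s ^ m)) :
    (PkronI F s g h (s ^ m) t * Amat lam s (s ^ m) a b t * Pmat F s g h (s ^ m)) ρ j =
      AentGen lam s (a * s * s) (Equiv.swap (g : ℕ) h a) b ((ρ : ℕ) / t) j ((ρ : ℕ) % t) := by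
  rw [PkronI_eq_permMatrix hgh, Pmat_eq_permMatrix hgh, PEquiv.toMatrix_toPEquiv_mul,
    PEquiv.mul_toMatrix_toPEquiv, symm_digitPerm, Equiv.symm_swap]
  simp only [submatrix_apply, id_eq, Amat, Aent, of_apply, ← Fin.coe_divNat, ← Fin.coe_modNat,
    divNat_blockPerm, modNat_blockPerm]
  exact AentGen_of_digit_perm lam (Equiv.swap (g : ℕ) h)
    (by rw [Fin.val_inj, Equiv.apply_eq_iff_eq, Fin.ext_iff])
    (digit_digitPerm_swap g h ρ.divNat) (digit_digitPerm_swap g h j) _ a b _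

/-- Lemma 8 of the paper: for distinct groups `g ≠ h`,
(i) `(P ⊗ I_t) · A_{g,b}^{(t)} · P` is obtained from `A_{h,b}^{(t)}` by replacing
`λ_{hs²+bs+j}` with `λ_{gs²+bs+j}` (block entry with digit position `h` and `λ`-base `gs²`);
(ii) for `a ∉ {g,h}`, `(P ⊗ I_t) · A_{a,b}^{(t)} · P = A_{a,b}^{(t)}`. -/
theorem statement9 (F : Type*) [Field F] [Fintype F] (n k d s ℓ : ℕ)
    (hk : 1 ≤ k) (hkn : k < n) (hd₁ : k + 1 ≤ d) (hd₂ : d ≤ n - 1)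
    (hs : s = d - k + 1) (hdiv : s ∣ n) (hℓ : ℓ = s ^ (n / s))
    (lam : ℕ → F)
    (g h : ℕ) (hg : g < n / s) (hh : h < n / s) (hgh : g ≠ h)
    (b : ℕ) (hb : b < s) (t : ℕ) (ht : 1 ≤ t) :
    (∀ (ρ : Fin (ℓ * t)) (j : Fin ℓ),
      (PkronI F s g h ℓ t * Amat lam s ℓ g b t * Pmat F s g h ℓ) ρ j =
        AentGen lam s (g * s * s) h b ((ρ : ℕ) / t) (j : ℕ) ((ρ : ℕ) % t)) ∧
    (∀ a, a < n / s → a ≠ g → a ≠ h →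
      PkronI F s g h ℓ t * Amat lam s ℓ a b t * Pmat F s g h ℓ = Amat lam s ℓ a b t) := by
  subst hℓ
  have key := statement9_general F lam (s := s) (g := ⟨g, hg⟩) (h := ⟨h, hh⟩) (Fin.ne_of_val_ne hgh)
  refine ⟨fun ρ j => ?_, fun a _ hag hah => Matrix.ext fun ρ j => ?_⟩
  · rw [key g b t ρ j, Equiv.swap_apply_left]
  · rw [key a b t ρ j, Equiv.swap_apply_of_ne_of_ne hag hah]
    rfl
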